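/- Let n ≥ 1 and let K ⊆ ℝ^n be a convex body whose centroid satisfies b(K) ∈ (1/(n+1))·E_K, where E_K is the inertial ellipsoid of K. Then vol(K ∩ -K) ≥ (1/(2^n · e)) · vol(K), where e is Euler's number. -/

import Mathlib

/-!
Let `G` be the interior of `K`, `b` its centroid, and `f z = vol (G ∩ (z - G))` (`overlap G z`).
By the Prékopa–Leindler inequality `f` is log-concave on `2G`, so once `0 ∈ G` a supporting
hyperplane of `log f` at `0` gives a linear functional `a` with `f z ≤ f 0 * exp (a z)` on `2G`.
The quantity to bound from below is `f 0 = vol (G ∩ -G)`.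

If `b = 0`, integrating `1 - a (x + y)` over `G × G` gives `(vol G)²`, while along the fibre
`x + y = z` it contributes `(1 - a z) f z ≤ f 0`; hence `(vol G)² ≤ vol (2G) f 0`. For a general
centroid the uniform density on `G` is replaced by an affine one. Put `v = cov(K)⁻¹ b` and
`s = bᵀ cov(K)⁻¹ b`, so that `s ≤ (n + 1)⁻²`, and `w x = 1 - ⟪v, x - b⟫ = (1 + s) - ⟪v, x⟫`. This
has mass `vol K` and barycenter `0`. It is nonnegative on `K` because a linear functional deviates
from its mean on a convex body by at most `√(n (n + 2))` standard deviations
(`sq_sub_centroid_le`). The latter comes from differentiating `r ↦ ∫ x in r • S, (ℓ x - c)²` at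
`r = 1` for a translate `S` of `K` which is star-shaped about `0` (`star_moment_ineq`), and it also
shows that the covariance matrix is invertible.

With `d = 1 + s` and `ℓ = ⟪v, ·⟫`, the integral of `(1 + m x + m y) w x w y` over `G × G`, where
`m = ℓ / d - a`, is `(vol G)²`. On the fibre `x + y = z`, the arithmetic-geometric mean inequality
gives `w x * w y ≤ (d - ℓ z / 2)² ≤ d² exp (-ℓ z / d)`, and `1 + m z ≤ exp (m z)`, so the fibre
contributes at most `d² f 0` (`volume_le_overlap_zero`). Thus
`vol K ≤ 2ⁿ (1 + s)² vol (K ∩ -K)`, and `(1 + s)² ≤ (5 / 4)² < e` when `n ≥ 1`.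
-/

open MeasureTheory Pointwise
open scoped ENNReal

noncomputable section

abbrev Euc (n : ℕ) := EuclideanSpace ℝ (Fin n)

/-- A convex body: a compact convex set with nonempty interior. -/
def IsConvexBody {n : ℕ} (K : Set (Euc n)) : Prop :=
  Convex ℝ K ∧ IsCompact K ∧ (interior K).Nonempty

/-- The centroid (barycenter) of a set `K`. -/
def centroid {n : ℕ} (K : Set (Euc n)) : Euc n :=
  (volume K).toReal⁻¹ • ∫ x in K, x

/-- The covariance matrix of (the uniform measure on) `K`. -/
def covMatrix {n : ℕ} (K : Set (Euc n)) : Matrix (Fin n) (Fin n) ℝ :=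
  Matrix.of ((volume K).toReal⁻¹ •
    ∫ x in K, fun i j => (x i - centroid K i) * (x j - centroid K j))

/-- The inertial ellipsoid `E_K = {x : xᵀ cov(K)⁻¹ x ≤ 1}`. -/
def inertialEllipsoid {n : ℕ} (K : Set (Euc n)) : Set (Euc n) :=
  {x | ∑ i, ∑ j, x i * (covMatrix K)⁻¹ i j * x j ≤ 1}

/-! ### The Prékopa–Leindler inequality -/

/-- One-dimensional Brunn–Minkowski inequality: up to compact approximation, the translates of
`A` by `min B` and of `B` by `max A` meet in at most one point and both lie in `C`. -/
theorem volume_add_volume_le {A B C : Set ℝ} (hA : MeasurableSet A) (hB : MeasurableSet B)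
    (hAn : A.Nonempty) (hBn : B.Nonempty) (hC : ∀ a ∈ A, ∀ b ∈ B, a + b ∈ C) :
    volume A + volume B ≤ volume C := by
  by_cases hA0 : volume A = 0
  · obtain ⟨a, ha⟩ := hAn
    rw [hA0, zero_add, ← measure_preimage_add volume a C]
    exact measure_mono fun b hb => hC a ha b hb
  by_cases hB0 : volume B = 0
  · obtain ⟨b, hb⟩ := hBn
    rw [hB0, add_zero, ← measure_preimage_add_right volume b C]
    exact measure_mono fun a ha => hC a ha b hb
  -- Inner regularity reduces to compact sets, where the extreme points are attained.
  by_contra! hlt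
  obtain ⟨r, hr, s, hs, hrs⟩ := ENNReal.exists_lt_add_of_lt_add hlt hA0 hB0
  obtain ⟨K, hKA, hK, hrK⟩ := hA.exists_lt_isCompact hr
  obtain ⟨L, hLB, hL, hsL⟩ := hB.exists_lt_isCompact hs
  have hKn : K.Nonempty := by
    rw [Set.nonempty_iff_ne_empty]; rintro rfl; simp at hrK
  have hLn : L.Nonempty := by
    rw [Set.nonempty_iff_ne_empty]; rintro rfl; simp at hsL
  obtain ⟨k, hkK, hk⟩ := hK.exists_isGreatest hKn
  obtain ⟨l, hlL, hl⟩ := hL.exists_isLeast hLn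
  set K' := (fun x => x + -l) ⁻¹' K
  set L' := (fun x => x + -k) ⁻¹' L
  have hK'm : MeasurableSet K' := (measurable_add_const _) hK.measurableSet
  have hsub : K' ∪ L' ⊆ C := by
    rintro x (hx | hx)
    · simpa using hC _ (hKA hx) _ (hLB hlL)
    · simpa using hC _ (hKA hkK) _ (hLB hx)
  have hinter : volume (K' ∩ L') = 0 := by
    refine measure_mono_null (t := {k + l}) ?_ (by simp)
    rintro x ⟨hx, hx'⟩
    have h1 := hk hx
    have h2 := hl hx'
    simp only [Set.mem_singleton_iff]
    linarith
  have : volume K + volume L ≤ volume C := by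
    calc volume K + volume L = volume K' + volume L' := by
          simp only [K', L', measure_preimage_add_right]
      _ = volume (K' ∪ L') := by
          rw [← measure_union_add_inter' hK'm, hinter, add_zero]
      _ ≤ volume C := measure_mono hsub
  exact absurd (hrs.trans (ENNReal.add_lt_add hrK hsL)) (not_lt.2 this)

/-- Layer-cake formula; the levels above `1` contribute nothing. -/
theorem lintegral_eq_lintegral_Ioo_of_le_one {f : ℝ → ℝ≥0∞} (hf : Measurable f)
    (h1 : ∀ x, f x ≤ 1) :
    ∫⁻ x, f x = ∫⁻ s in Set.Ioo (0 : ℝ) 1, volume {x | ENNReal.ofReal s < f x} := by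
  have hfin : ∀ x, f x ≠ ⊤ := fun x => ((h1 x).trans_lt ENNReal.one_lt_top).ne
  have e : ∫⁻ x, f x = ∫⁻ x, ENNReal.ofReal (f x).toReal :=
    lintegral_congr fun x => (ENNReal.ofReal_toReal (hfin x)).symm
  rw [e, lintegral_eq_lintegral_meas_lt volume (Filter.Eventually.of_forall fun x => by simp)
    hf.ennreal_toReal.aemeasurable]
  have e2 : ∀ s : ℝ, 0 < s →
      volume {x | s < (f x).toReal} = volume {x | ENNReal.ofReal s < f x} := fun s hs => by
    congr 1; ext x
    exact (ENNReal.ofReal_lt_iff_lt_toReal hs.le (hfin x)).symm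
  rw [setLIntegral_congr_fun measurableSet_Ioi (fun s hs => e2 s hs)]
  rw [← Set.Ioo_union_Ici_eq_Ioi (zero_lt_one : (0:ℝ) < 1),
    lintegral_union measurableSet_Ici (by
      rw [Set.disjoint_left]; rintro x ⟨_, hx⟩ hx'; exact absurd hx (not_lt.2 hx'))]
  have : ∫⁻ s in Set.Ici (1:ℝ), volume {x | ENNReal.ofReal s < f x} = 0 := by
    rw [setLIntegral_congr_fun (g := fun _ => 0) measurableSet_Ici]
    · simp
    · intro s hs
      have : {x | ENNReal.ofReal s < f x} = ∅ := by
        ext x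
        simp only [Set.mem_ofPred_eq, Set.mem_empty_iff_false, iff_false, not_lt]
        exact (h1 x).trans (by simpa using hs)
      simp [this]
  rw [this, add_zero]

/-- The arithmetic-mean form of the Prékopa–Leindler inequality on `ℝ` for functions with supremum
`1`: for every level `s < 1` the superlevel sets of `f` and `g` are nonempty, and their weighted
Minkowski sum lies in the superlevel set of `h`. -/
theorem prekopa_leindler_normalized {t : ℝ} (ht0 : 0 < t) (ht1 : t < 1) {f g h : ℝ → ℝ≥0∞}
    (hf : Measurable f) (hg : Measurable g) (hh : Measurable h)
    (hf1 : ⨆ x, f x = 1) (hg1 : ⨆ x, g x = 1)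
    (H : ∀ x y, f x ^ (1 - t) * g y ^ t ≤ h ((1 - t) * x + t * y)) :
    ENNReal.ofReal (1 - t) * (∫⁻ x, f x) + ENNReal.ofReal t * (∫⁻ x, g x) ≤ ∫⁻ x, h x := by
  have ht' : 0 < 1 - t := by linarith
  have hfle : ∀ x, f x ≤ 1 := fun x => hf1 ▸ le_iSup f x
  have hgle : ∀ x, g x ≤ 1 := fun x => hg1 ▸ le_iSup g x
  have hmin : ∫⁻ x, min (h x) 1 ≤ ∫⁻ x, h x := lintegral_mono fun x => min_le_left _ _
  refine le_trans ?_ hmin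
  rw [lintegral_eq_lintegral_Ioo_of_le_one hf hfle, lintegral_eq_lintegral_Ioo_of_le_one hg hgle,
    lintegral_eq_lintegral_Ioo_of_le_one (hh.min measurable_const) (fun x => min_le_right _ _)]
  have manti : ∀ k : ℝ → ℝ≥0∞, Measurable fun s : ℝ => volume {x | ENNReal.ofReal s < k x} := by
    intro k
    refine Antitone.measurable fun s s' hs => measure_mono fun x hx => ?_
    exact (ENNReal.ofReal_le_ofReal hs).trans_lt hx
  rw [← lintegral_const_mul _ (manti f), ← lintegral_const_mul _ (manti g),
    ← lintegral_add_left ((manti f).const_mul _)]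
  refine setLIntegral_mono' measurableSet_Ioo fun s ⟨hs0, hs1⟩ => ?_
  have scal : ∀ (c : ℝ) (hc : 0 < c) (S : Set ℝ), ENNReal.ofReal c * volume S = volume (c • S) := by
    intro c hc S
    rw [Measure.addHaar_smul]; simp [abs_of_pos hc]
  have hs1' : ENNReal.ofReal s < 1 := by simpa using hs1
  rw [scal _ ht', scal _ ht0]
  refine volume_add_volume_le ?_ ?_ ?_ ?_ ?_
  · exact (measurableSet_lt measurable_const hf).const_smul₀ _
  · exact (measurableSet_lt measurable_const hg).const_smul₀ _
  · rw [Set.smul_set_nonempty]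
    rw [← hf1] at hs1'
    exact lt_iSup_iff.1 hs1'
  · rw [Set.smul_set_nonempty]
    rw [← hg1] at hs1'
    exact lt_iSup_iff.1 hs1'
  · rintro _ ⟨x, hx, rfl⟩ _ ⟨y, hy, rfl⟩
    simp only [Set.mem_ofPred_eq, smul_eq_mul, lt_min_iff] at hx hy ⊢
    refine ⟨lt_of_lt_of_le ?_ (H x y), hs1'⟩
    calc ENNReal.ofReal s = ENNReal.ofReal s ^ (1 - t) * ENNReal.ofReal s ^ t := by
          rw [← ENNReal.rpow_add _ _ (by simpa using hs0) (by simp)]; simp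
      _ < f x ^ (1 - t) * g y ^ t :=
          ENNReal.mul_lt_mul (ENNReal.rpow_lt_rpow hx ht') (ENNReal.rpow_lt_rpow hy ht0)

/-- Weighted arithmetic-geometric mean inequality in `ℝ≥0∞`, including infinite values. -/
theorem rpow_mul_rpow_le_add {t : ℝ} (ht0 : 0 < t) (ht1 : t < 1) (a b : ℝ≥0∞) :
    a ^ (1 - t) * b ^ t ≤ ENNReal.ofReal (1 - t) * a + ENNReal.ofReal t * b := by
  have ht' : 0 < 1 - t := by linarith
  have hpq : ((1 - t)⁻¹).HolderConjugate t⁻¹ := by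
    rw [Real.holderConjugate_iff]
    refine ⟨(one_lt_inv₀ ht').2 (by linarith), by simp⟩
  have := ENNReal.young_inequality (a ^ (1 - t)) (b ^ t) hpq
  rw [← ENNReal.rpow_mul, ← ENNReal.rpow_mul, mul_inv_cancel₀ ht'.ne', mul_inv_cancel₀ ht0.ne',
    ENNReal.rpow_one, ENNReal.rpow_one, ENNReal.ofReal_inv_of_pos ht', ENNReal.ofReal_inv_of_pos ht0,
    div_eq_mul_inv, div_eq_mul_inv, inv_inv, inv_inv, mul_comm a, mul_comm b] at this
  exact this

/-- Prékopa–Leindler on `ℝ` for bounded functions, by dividing `f` and `g` by their suprema. -/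
theorem prekopa_leindler_real_bdd {t : ℝ} (ht0 : 0 < t) (ht1 : t < 1) {f g h : ℝ → ℝ≥0∞}
    (hf : Measurable f) (hg : Measurable g) (hh : Measurable h)
    (hf1 : ⨆ x, f x ≠ ⊤) (hg1 : ⨆ x, g x ≠ ⊤)
    (H : ∀ x y, f x ^ (1 - t) * g y ^ t ≤ h ((1 - t) * x + t * y)) :
    (∫⁻ x, f x) ^ (1 - t) * (∫⁻ x, g x) ^ t ≤ ∫⁻ x, h x := by
  have ht' : 0 < 1 - t := by linarith
  set a := ⨆ x, f x with ha
  set b := ⨆ x, g x with hb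
  by_cases ha0 : a = 0
  · have : ∀ x, f x = 0 := fun x => le_antisymm (ha0 ▸ le_iSup f x) zero_le
    simp [this, ENNReal.zero_rpow_of_pos ht']
  by_cases hb0 : b = 0
  · have : ∀ x, g x = 0 := fun x => le_antisymm (hb0 ▸ le_iSup g x) zero_le
    simp [this, ENNReal.zero_rpow_of_pos ht0]
  set c := a ^ (1 - t) * b ^ t with hc
  have hap0 : a ^ (1 - t) ≠ 0 := by simp [ha0, hf1]
  have hbp0 : b ^ t ≠ 0 := by simp [hb0, hg1]
  have hapt : a ^ (1 - t) ≠ ⊤ := ENNReal.rpow_ne_top_of_nonneg ht'.le hf1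
  have hbpt : b ^ t ≠ ⊤ := ENNReal.rpow_ne_top_of_nonneg ht0.le hg1
  have hc0 : c ≠ 0 := mul_ne_zero hap0 hbp0
  have hct : c ≠ ⊤ := ENNReal.mul_ne_top hapt hbpt
  have hcinv : c⁻¹ = (a⁻¹) ^ (1 - t) * (b⁻¹) ^ t := by
    rw [hc, ENNReal.mul_inv (Or.inl hap0) (Or.inl hapt), ENNReal.inv_rpow, ENNReal.inv_rpow]
  have key := prekopa_leindler_normalized ht0 ht1 (f := fun x => a⁻¹ * f x)
    (g := fun x => b⁻¹ * g x) (h := fun x => c⁻¹ * h x) (hf.const_mul _) (hg.const_mul _)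
    (hh.const_mul _)
    (by rw [← ENNReal.mul_iSup, ← ha, ENNReal.inv_mul_cancel ha0 hf1])
    (by rw [← ENNReal.mul_iSup, ← hb, ENNReal.inv_mul_cancel hb0 hg1])
    (fun x y => by
      rw [ENNReal.mul_rpow_of_nonneg _ _ ht'.le, ENNReal.mul_rpow_of_nonneg _ _ ht0.le,
        mul_mul_mul_comm, ← hcinv]
      gcongr
      exact H x y)
  have key2 := (rpow_mul_rpow_le_add ht0 ht1 _ _).trans key
  rw [lintegral_const_mul _ hf, lintegral_const_mul _ hg, lintegral_const_mul _ hh,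
    ENNReal.mul_rpow_of_nonneg _ _ ht'.le, ENNReal.mul_rpow_of_nonneg _ _ ht0.le,
        mul_mul_mul_comm, ← hcinv] at key2
  rwa [ENNReal.mul_le_mul_iff_right (by simpa using hct) (by simpa using hc0)] at key2

/-- Prékopa–Leindler on `ℝ`; unbounded functions are truncated at height `N → ∞`. -/
theorem prekopa_leindler_real {t : ℝ} (ht0 : 0 < t) (ht1 : t < 1) {f g h : ℝ → ℝ≥0∞}
    (hf : Measurable f) (hg : Measurable g) (hh : Measurable h)
    (H : ∀ x y, f x ^ (1 - t) * g y ^ t ≤ h ((1 - t) * x + t * y)) :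
    (∫⁻ x, f x) ^ (1 - t) * (∫⁻ x, g x) ^ t ≤ ∫⁻ x, h x := by
  have ht' : 0 < 1 - t := by linarith
  by_cases hf0 : ∫⁻ x, f x = 0
  · simp [hf0, ENNReal.zero_rpow_of_pos ht']
  by_cases hg0 : ∫⁻ x, g x = 0
  · simp [hg0, ENNReal.zero_rpow_of_pos ht0]
  have lim : ∀ k : ℝ → ℝ≥0∞, Measurable k →
      Filter.Tendsto (fun N : ℕ => ∫⁻ x, min (k x) N) Filter.atTop (nhds (∫⁻ x, k x)) := by
    intro k hk
    refine lintegral_tendsto_of_tendsto_of_monotone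
      (fun N => (hk.min measurable_const).aemeasurable)
      (Filter.Eventually.of_forall fun x N M hNM => min_le_min le_rfl (by exact_mod_cast hNM))
      (Filter.Eventually.of_forall fun x => ?_)
    have := (tendsto_const_nhds (x := k x)).min ENNReal.tendsto_nat_nhds_top
    simpa using this
  have hF := ((ENNReal.continuous_rpow_const (y := 1 - t)).tendsto _).comp (lim f hf)
  have hG := ((ENNReal.continuous_rpow_const (y := t)).tendsto _).comp (lim g hg)
  refine le_of_tendsto (ENNReal.Tendsto.mul hF (Or.inl ?_) hG (Or.inl ?_))
    (Filter.Eventually.of_forall fun N => ?_)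
  · simp [hf0, ht', not_lt.2 ht'.le]
  · simp [hg0, not_lt.2 ht0.le]
  · refine prekopa_leindler_real_bdd ht0 ht1 (hf.min measurable_const) (hg.min measurable_const)
      hh ?_ ?_ fun x y => ?_
    · exact ((iSup_le fun x => min_le_right _ _).trans_lt (ENNReal.natCast_lt_top N)).ne
    · exact ((iSup_le fun x => min_le_right _ _).trans_lt (ENNReal.natCast_lt_top N)).ne
    · refine le_trans ?_ (H x y)
      gcongr <;> exact min_le_left _ _

/-- Prékopa–Leindler on `Fin n → ℝ`, by induction on `n`: the marginals in the first coordinate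
satisfy the one-dimensional hypothesis because of the inequality on the fibres. -/
theorem prekopa_leindler_pi {t : ℝ} (ht0 : 0 < t) (ht1 : t < 1) (n : ℕ) :
    ∀ {f g h : (Fin n → ℝ) → ℝ≥0∞}, Measurable f → Measurable g → Measurable h →
    (∀ x y, f x ^ (1 - t) * g y ^ t ≤ h ((1 - t) • x + t • y)) →
    (∫⁻ x, f x) ^ (1 - t) * (∫⁻ x, g x) ^ t ≤ ∫⁻ x, h x := by
  induction n with
  | zero =>
    intro f g h hf hg hh H
    have hu : (volume : Measure (Fin 0 → ℝ)) Set.univ = 1 := by simp [volume_pi]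
    simp only [lintegral_unique, hu, mul_one]
    convert H default default
  | succ n ih =>
    intro f g h hf hg hh H
    let e := MeasurableEquiv.piFinSuccAbove (fun _ : Fin (n + 1) => ℝ) 0
    have he : MeasurePreserving e.symm volume volume :=
      (volume_preserving_piFinSuccAbove (fun _ : Fin (n + 1) => ℝ) 0).symm _
    have fub : ∀ k : (Fin (n + 1) → ℝ) → ℝ≥0∞, Measurable k →
        ∫⁻ x, k x = ∫⁻ s : ℝ, ∫⁻ y : Fin n → ℝ, k (e.symm (s, y)) := by
      intro k hk
      rw [← he.lintegral_comp hk]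
      exact lintegral_prod _ (hk.comp e.symm.measurable).aemeasurable
    have hm : ∀ k : (Fin (n + 1) → ℝ) → ℝ≥0∞, Measurable k →
        Measurable fun s : ℝ => ∫⁻ y : Fin n → ℝ, k (e.symm (s, y)) := fun k hk =>
      (hk.comp e.symm.measurable).lintegral_prod_right'
    have hlin : ∀ (s s' : ℝ) (y y' : Fin n → ℝ),
        (1 - t) • e.symm (s, y) + t • e.symm (s', y')
          = e.symm ((1 - t) * s + t * s', (1 - t) • y + t • y') := by
      intro s s' y y'
      ext i
      refine Fin.cases ?_ (fun i => ?_) i <;> simp [e, MeasurableEquiv.piFinSuccAbove]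
    rw [fub f hf, fub g hg, fub h hh]
    refine prekopa_leindler_real ht0 ht1 (hm f hf) (hm g hg) (hm h hh) fun s s' => ?_
    refine ih ?_ ?_ ?_ fun y y' => ?_
    · exact hf.comp (e.symm.measurable.comp measurable_prodMk_left)
    · exact hg.comp (e.symm.measurable.comp measurable_prodMk_left)
    · exact hh.comp (e.symm.measurable.comp measurable_prodMk_left)
    · rw [← hlin]; exact H _ _

/-- The Prékopa–Leindler inequality on Euclidean space, transported from `Fin n → ℝ`. -/
theorem prekopa_leindler {n : ℕ} {t : ℝ} (ht0 : 0 < t) (ht1 : t < 1) {f g h : Euc n → ℝ≥0∞}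
    (hf : Measurable f) (hg : Measurable g) (hh : Measurable h)
    (H : ∀ x y, f x ^ (1 - t) * g y ^ t ≤ h ((1 - t) • x + t • y)) :
    (∫⁻ x, f x) ^ (1 - t) * (∫⁻ x, g x) ^ t ≤ ∫⁻ x, h x := by
  have he := (EuclideanSpace.volume_preserving_symm_measurableEquiv_toLp (Fin n)).symm
  simp only [MeasurableEquiv.symm_symm] at he
  rw [← he.lintegral_comp hf, ← he.lintegral_comp hg, ← he.lintegral_comp hh]
  have hm := (MeasurableEquiv.toLp 2 (Fin n → ℝ)).measurable
  exact prekopa_leindler_pi ht0 ht1 n (hf.comp hm) (hg.comp hm) (hh.comp hm) fun x y => H _ _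

/-! ### Log-concavity of the overlap function -/

/-- The volume of `G ∩ (z - G)`, that is, the autoconvolution of the indicator of `G` at `z`. -/
def overlap {n : ℕ} (G : Set (Euc n)) (z : Euc n) : ℝ :=
  volume.real (G ∩ (fun x => z - x) ⁻¹' G)

theorem overlap_pos {n : ℕ} {G : Set (Euc n)} (hGo : IsOpen G) (hfin : volume G ≠ ⊤)
    {z : Euc n} (hz : (2 : ℝ)⁻¹ • z ∈ G) : 0 < overlap G z := by
  have ho : IsOpen (G ∩ (fun x => z - x) ⁻¹' G) :=
    hGo.inter (hGo.preimage (by fun_prop))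
  have hne : (G ∩ (fun x => z - x) ⁻¹' G).Nonempty := by
    refine ⟨(2 : ℝ)⁻¹ • z, hz, ?_⟩
    have : z - (2 : ℝ)⁻¹ • z = (2 : ℝ)⁻¹ • z := by
      rw [sub_eq_iff_eq_add, ← add_smul]; norm_num
    simpa [this] using hz
  exact ENNReal.toReal_pos (ho.measure_pos volume hne).ne'
    (measure_ne_top_of_subset Set.inter_subset_left hfin)

/-- Multiplicative Brunn–Minkowski for the sets `G ∩ (z - G)`: their convex combinations lie in
the set with the corresponding convex combination of the parameters. -/
theorem overlap_rpow_mul_le {n : ℕ} {G : Set (Euc n)} (hGo : IsOpen G) (hGc : Convex ℝ G)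
    (hfin : volume G ≠ ⊤) {t : ℝ} (ht0 : 0 < t) (ht1 : t < 1) (z z' : Euc n) :
    overlap G z ^ (1 - t) * overlap G z' ^ t ≤ overlap G ((1 - t) • z + t • z') := by
  have ht' : 0 < 1 - t := by linarith
  have ho : ∀ z, IsOpen (G ∩ (fun x => z - x) ⁻¹' G) := fun z =>
    hGo.inter (hGo.preimage (by fun_prop))
  have hm : ∀ z, Measurable ((G ∩ (fun x => z - x) ⁻¹' G).indicator (1 : Euc n → ℝ≥0∞)) :=
    fun z => measurable_one.indicator (ho z).measurableSet
  have key := prekopa_leindler ht0 ht1 (hm z) (hm z') (hm ((1 - t) • z + t • z')) ?_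
  · simp only [lintegral_indicator_one (ho _).measurableSet] at key
    have := ENNReal.toReal_mono (measure_ne_top_of_subset Set.inter_subset_left hfin) key
    rwa [ENNReal.toReal_mul, ← ENNReal.toReal_rpow, ← ENNReal.toReal_rpow] at this
  · intro x y
    by_cases hx : x ∈ G ∩ (fun x => z - x) ⁻¹' G
    swap
    · simp [hx, ENNReal.zero_rpow_of_pos ht']
    by_cases hy : y ∈ G ∩ (fun x => z' - x) ⁻¹' G
    swap
    · simp [hy, ENNReal.zero_rpow_of_pos ht0]
    have hxy : (1 - t) • x + t • y ∈
        G ∩ (fun x => ((1 - t) • z + t • z') - x) ⁻¹' G := by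
      refine ⟨hGc hx.1 hy.1 ht'.le ht0.le (by ring), ?_⟩
      have := hGc hx.2 hy.2 ht'.le ht0.le (by ring)
      simp only [Set.mem_preimage] at this ⊢
      convert this using 1
      module
    rw [Set.indicator_of_mem hx, Set.indicator_of_mem hy, Set.indicator_of_mem hxy]
    simp

theorem concaveOn_log_overlap {n : ℕ} {G : Set (Euc n)} (hGo : IsOpen G) (hGc : Convex ℝ G)
    (hfin : volume G ≠ ⊤) :
    ConcaveOn ℝ {z | (2 : ℝ)⁻¹ • z ∈ G} fun z => Real.log (overlap G z) := by
  have hconv : Convex ℝ {z : Euc n | (2 : ℝ)⁻¹ • z ∈ G} := by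
    intro x hx y hy a b ha hb hab
    have := hGc hx hy ha hb hab
    simp only [Set.mem_ofPred_eq]
    convert this using 1
    module
  refine concaveOn_iff_forall_pos.2 ⟨hconv, ?_⟩
  intro x hx y hy a b ha hb hab
  obtain rfl : a = 1 - b := by linarith
  have hxp := overlap_pos hGo hfin hx
  have hyp := overlap_pos hGo hfin hy
  have h := overlap_rpow_mul_le hGo hGc hfin hb (by linarith) x y
  have h2 := Real.log_le_log (by positivity) h
  rw [Real.log_mul (by positivity) (by positivity), Real.log_rpow hxp, Real.log_rpow hyp] at h2
  simpa using h2

/-- Supporting hyperplane: separate the point `(0, φ 0)` from the strict hypograph of `φ`, which is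
open and convex. The separating functional is not vertical because it is positive on `(0, 1)`. -/
theorem ConcaveOn.exists_supporting_functional {E : Type*} [NormedAddCommGroup E]
    [NormedSpace ℝ E] [FiniteDimensional ℝ E] {U : Set E} (hU : IsOpen U) {φ : E → ℝ}
    (hφ : ConcaveOn ℝ U φ) (h0 : (0 : E) ∈ U) :
    ∃ a : StrongDual ℝ E, ∀ z ∈ U, φ z ≤ φ 0 + a z := by
  have hcont := hφ.continuousOn hU
  have hopen : IsOpen {p : E × ℝ | p.1 ∈ U ∧ p.2 < φ p.1} := by
    have h1 : IsOpen (U ×ˢ (Set.univ : Set ℝ)) := hU.prod isOpen_univ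
    have h2 : ContinuousOn (fun p : E × ℝ => φ p.1 - p.2) (U ×ˢ (Set.univ : Set ℝ)) :=
      (hcont.comp continuousOn_fst fun p hp => hp.1).sub continuousOn_snd
    convert h2.isOpen_inter_preimage h1 (isOpen_Ioi (a := (0:ℝ))) using 1
    ext p; simp
  have hnot : ((0 : E), φ 0) ∉ {p : E × ℝ | p.1 ∈ U ∧ p.2 < φ p.1} := by simp
  obtain ⟨f, hf⟩ := geometric_hahn_banach_open_point hφ.convex_strict_hypograph hopen hnot
  have hsplit : ∀ (z : E) (r : ℝ), f (z, r) = f (z, 0) + r * f (0, 1) := by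
    intro z r
    have : ((z, r) : E × ℝ) = (z, 0) + r • (0, 1) := by simp
    rw [this, map_add, map_smul, smul_eq_mul]
  have hβ : 0 < f (0, 1) := by
    have h := hf (0, φ 0 - 1) ⟨h0, by simp⟩
    rw [hsplit, hsplit 0 (φ 0)] at h
    linarith
  refine ⟨-(f (0, 1))⁻¹ • (f.comp (ContinuousLinearMap.inl ℝ E ℝ)), fun z hz => ?_⟩
  refine le_of_forall_lt fun r hr => ?_
  have h := hf (z, r) ⟨hz, hr⟩
  rw [hsplit, hsplit 0 (φ 0)] at h
  have h00 : f ((0 : E), (0 : ℝ)) = 0 := map_zero f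
  rw [h00] at h
  simp only [smul_apply, ContinuousLinearMap.comp_apply,
    ContinuousLinearMap.inl_apply, smul_eq_mul]
  have : r * f (0, 1) < (φ 0 + -(f (0, 1))⁻¹ * f (z, 0)) * f (0, 1) := by
    field_simp
    linarith
  exact lt_of_mul_lt_mul_right this hβ.le

/-! ### Deviation of linear functionals on convex bodies -/

/-- Monotonicity of `r ↦ ∫ x in r • S, q x` for `S` star-shaped about `0` and `q ≥ 0`, written out
for `q = (ℓ - c)²` and differentiated at `r = 1`. Equivalently, the divergence of the field
`(ℓ x - c)² x` has nonnegative integral over `S`. -/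
theorem star_moment_ineq {E : Type*} [NormedAddCommGroup E] [NormedSpace ℝ E]
    [FiniteDimensional ℝ E] [MeasurableSpace E] [BorelSpace E] (μ : Measure E)
    [μ.IsAddHaarMeasure] {S : Set E} (hS : IsCompact S) (hstar : StarConvex ℝ 0 S)
    (ℓ : StrongDual ℝ E) (c : ℝ) :
    0 ≤ (Module.finrank ℝ E + 2) * (∫ x in S, ℓ x ^ 2 ∂μ)
      - 2 * c * (Module.finrank ℝ E + 1) * (∫ x in S, ℓ x ∂μ)
      + Module.finrank ℝ E * c ^ 2 * μ.real S := by
  set N := Module.finrank ℝ E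
  set A := ∫ x in S, ℓ x ^ 2 ∂μ
  set B := ∫ x in S, ℓ x ∂μ
  set V := μ.real S
  have hinteg : ∀ f : E → ℝ, Continuous f → IntegrableOn f S μ := fun f hf =>
    hf.continuousOn.integrableOn_compact hS
  have hP : ∀ r : ℝ, 0 < r →
      ∫ x in r • S, (ℓ x - c) ^ 2 ∂μ = r ^ N * (r ^ 2 * A - 2 * c * r * B + c ^ 2 * V) := by
    intro r hr
    have h := Measure.setIntegral_comp_smul μ (fun x => (ℓ x - c) ^ 2) S hr.ne'
    have hpow : (0 : ℝ) < r ^ N := by positivity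
    rw [abs_of_pos (by positivity), smul_eq_mul, inv_mul_eq_div, eq_div_iff hpow.ne'] at h
    rw [← h, mul_comm]
    congr 1
    have e : ∀ x, (ℓ (r • x) - c) ^ 2 = r ^ 2 * ℓ x ^ 2 - 2 * c * r * ℓ x + c ^ 2 := by
      intro x; rw [map_smul, smul_eq_mul]; ring
    simp only [e]
    rw [integral_add, integral_sub, integral_const_mul, integral_const_mul, setIntegral_const,
      smul_eq_mul]
    · simp only [A, B, V]; ring
    all_goals exact hinteg _ (by fun_prop)
  have hmono : MonotoneOn (fun r : ℝ => r ^ N * (r ^ 2 * A - 2 * c * r * B + c ^ 2 * V))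
      (Set.Ici 1) := by
    intro r hr r' hr' hrr'
    have hr0 : (0 : ℝ) < r := lt_of_lt_of_le one_pos hr
    have hr0' : (0 : ℝ) < r' := lt_of_lt_of_le one_pos hr'
    simp only
    rw [← hP r hr0, ← hP r' hr0']
    refine setIntegral_mono_set ?_ (Filter.Eventually.of_forall fun x => sq_nonneg _) ?_
    · exact ContinuousOn.integrableOn_compact (hS.smul r') (by fun_prop)
    · refine Filter.Eventually.of_forall ?_
      rintro _ ⟨x, hx, rfl⟩
      refine ⟨(r / r') • x, ?_, ?_⟩
      · exact (starConvex_zero_iff.1 hstar) hx (by positivity) ((div_le_one hr0').2 hrr')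
      · simp only [smul_smul]; congr 1; field_simp
  have hd : HasDerivAt (fun r : ℝ => r ^ N * (r ^ 2 * A - 2 * c * r * B + c ^ 2 * V))
      ((N + 2) * A - 2 * c * (N + 1) * B + N * c ^ 2 * V) 1 := by
    have h1 : HasDerivAt (fun r : ℝ => r ^ N) (N * 1 ^ (N - 1)) 1 := hasDerivAt_pow N 1
    have h2 : HasDerivAt (fun r : ℝ => r ^ 2 * A - 2 * c * r * B + c ^ 2 * V)
        (2 * A - 2 * c * B) 1 := by
      have := ((((hasDerivAt_pow 2 (1:ℝ)).mul_const A).sub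
        (((hasDerivAt_id (1:ℝ)).const_mul (2 * c)).mul_const B)).add_const (c ^ 2 * V))
      exact this.congr_deriv (by norm_num)
    exact (h1.mul h2).congr_deriv (by simp only [one_pow]; ring)
  have := hmono.derivWithin_nonneg (x := 1)
  rwa [hd.hasDerivWithinAt.derivWithin (uniqueDiffOn_Ici _ _ Set.self_mem_Ici)] at this

/-- A linear functional on an `N`-dimensional convex body deviates from its mean by at most
`√(N (N + 2))` standard deviations; here `p` is the centroid. The bound is attained on cones. -/
theorem sq_sub_centroid_le {E : Type*} [NormedAddCommGroup E] [NormedSpace ℝ E]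
    [FiniteDimensional ℝ E] [MeasurableSpace E] [BorelSpace E] (μ : Measure E)
    [μ.IsAddHaarMeasure] {K : Set E} (hK : IsCompact K) (hKc : Convex ℝ K)
    (ℓ : StrongDual ℝ E) {p : E} (hp : ∫ x in K, ℓ (x - p) ∂μ = 0)
    {x₀ : E} (hx₀ : x₀ ∈ K) :
    ℓ (x₀ - p) ^ 2 * μ.real K ≤
      Module.finrank ℝ E * (Module.finrank ℝ E + 2) * ∫ x in K, ℓ (x - p) ^ 2 ∂μ := by
  set N : ℝ := (Module.finrank ℝ E : ℝ) with hN
  set V := μ.real K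
  set u := ℓ (x₀ - p) with hu
  set Q := ∫ x in K, ℓ (x - p) ^ 2 ∂μ with hQ
  have hN0 : 0 ≤ N := Nat.cast_nonneg _
  have hinteg : ∀ f : E → ℝ, Continuous f → IntegrableOn f K μ := fun f hf =>
    hf.continuousOn.integrableOn_compact hK
  set S := (fun x => x + x₀) ⁻¹' K with hSdef
  have hmp := measurePreserving_add_right μ x₀
  have htr : ∀ f : E → ℝ, ∫ x in S, f x ∂μ = ∫ x in K, f (x - x₀) ∂μ := by
    intro f
    rw [← hmp.setIntegral_preimage_emb (measurableEmbedding_addRight x₀) (fun x => f (x - x₀)) K]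
    simp [S]
  have hSV : μ.real S = V := by
    simp only [S, V, Measure.real, measure_preimage_add_right]
  have hS : IsCompact S := by
    have : S = (Homeomorph.addRight x₀).symm '' K := by
      rw [Homeomorph.image_symm]; rfl
    rw [this]
    exact hK.image (Homeomorph.continuous _)
  have hstar : StarConvex ℝ 0 S := by
    have : Convex ℝ S := hKc.translate_preimage_left x₀
    exact this.starConvex (by simpa [S] using hx₀)
  have hB : ∫ x in S, ℓ x ∂μ = -u * V := by
    rw [htr]
    have e : ∀ x, ℓ (x - x₀) = ℓ (x - p) - u := by
      intro x; rw [hu, ← map_sub]; congr 1; abel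
    simp only [e]
    rw [integral_sub (hinteg _ (by fun_prop)) (hinteg _ (by fun_prop)), hp, setIntegral_const]
    simp [V]; ring
  have hA : ∫ x in S, ℓ x ^ 2 ∂μ = Q + u ^ 2 * V := by
    rw [htr]
    have e : ∀ x, ℓ (x - x₀) ^ 2 = ℓ (x - p) ^ 2 - 2 * u * ℓ (x - p) + u ^ 2 := by
      intro x
      have : ℓ (x - x₀) = ℓ (x - p) - u := by
        rw [hu, ← map_sub]; congr 1; abel
      rw [this]; ring
    simp only [e]
    rw [integral_add, integral_sub, integral_const_mul, hp, setIntegral_const, smul_eq_mul]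
    · simp [V, Q]; ring
    all_goals exact hinteg _ (by fun_prop)
  rcases hN0.eq_or_lt with h0 | hNpos
  · -- In dimension zero every vector vanishes.
    have : Module.finrank ℝ E = 0 := by exact_mod_cast (hN ▸ h0).symm
    have hsub := Module.finrank_zero_iff.1 this
    have : u = 0 := by rw [hu, Subsingleton.elim (x₀ - p) 0, map_zero]
    rw [← h0, this]; simp
  -- The value of `c` minimising the quadratic polynomial in `star_moment_ineq`.
  have h := star_moment_ineq μ hS hstar ℓ (-u * (N + 1) / N)
  rw [hA, hB, hSV, ← hN] at h
  have h2 : (N + 2) * (Q + u ^ 2 * V) - 2 * (-u * (N + 1) / N) * (N + 1) * (-u * V)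
      + N * (-u * (N + 1) / N) ^ 2 * V = (N * (N + 2) * Q - u ^ 2 * V) / N := by
    field_simp; ring
  rw [h2] at h
  have := mul_nonneg h hNpos.le
  rw [div_mul_cancel₀ _ hNpos.ne'] at this
  linarith

/-! ### Volume bound from an affine density with barycenter zero -/

/-- A nonnegative affine density `d - ℓ` on `G` with total mass `vol G` and barycenter `0` bounds
`vol (G ∩ -G)` from below. With `w = d - ℓ` and `m = ℓ / d - a`, where `a` is the slope of a
supporting functional of `log (overlap G)` at `0`, the double integral of
`(1 + m x + m y) w x w y` over `G × G` is `(vol G)²`, while its density in the variable `z = x + y`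
is pointwise at most `d² * overlap G 0` on `2G`. -/
theorem volume_le_overlap_zero {n : ℕ} {G : Set (Euc n)} (hGo : IsOpen G) (hGc : Convex ℝ G)
    (hGb : Bornology.IsBounded G) (hV : 0 < volume.real G) (ℓ : StrongDual ℝ (Euc n)) {d : ℝ}
    (hd : 0 < d) (hw : ∀ x ∈ G, 0 ≤ d - ℓ x) (hmass : ∫ x in G, (d - ℓ x) = volume.real G)
    (hmean : ∫ x in G, (d - ℓ x) • x = 0) :
    volume.real G ≤ 2 ^ n * d ^ 2 * overlap G 0 := by
  have hGm : MeasurableSet G := hGo.measurableSet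
  have hfin : volume G ≠ ⊤ := hGb.measure_lt_top.ne
  have hinteg : ∀ {F : Type} [NormedAddCommGroup F] (f : Euc n → F), Continuous f →
      IntegrableOn f G := fun f hf =>
    (hf.continuousOn.integrableOn_compact hGb.isCompact_closure).mono_set subset_closure
  have hmean' : ∀ m : StrongDual ℝ (Euc n), ∫ x in G, (d - ℓ x) * m x = 0 := by
    intro m
    have h := m.integral_comp_comm (μ := volume.restrict G) (φ := fun x => (d - ℓ x) • x)
      (hinteg _ (by fun_prop))
    rw [hmean, map_zero] at h
    rw [← h]
    exact integral_congr_ae (Filter.Eventually.of_forall fun x => by simp)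
  -- A nonnegative density of positive mass on the convex set `G` has its barycenter in `G`.
  have h0G : (0 : Euc n) ∈ G := by
    by_contra h0
    obtain ⟨m, hm⟩ := geometric_hahn_banach_point_open hGc hGo h0
    simp only [map_zero] at hm
    have h1 := (setIntegral_eq_zero_iff_of_nonneg_ae
      ((ae_restrict_mem hGm).mono fun x hx => mul_nonneg (hw x hx) (hm x hx).le)
      (hinteg (fun x => (d - ℓ x) * m x) (by fun_prop))).1 (hmean' m)
    have h2 : ∫ x in G, (d - ℓ x) = 0 := by
      refine integral_eq_zero_of_ae ?_
      filter_upwards [h1, ae_restrict_mem hGm] with x hx hxG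
      exact (mul_eq_zero.1 hx).resolve_right (hm x hxG).ne'
    linarith
  set U : Set (Euc n) := {z | (2 : ℝ)⁻¹ • z ∈ G} with hU
  have hUo : IsOpen U := hGo.preimage (by fun_prop)
  have h0U : (0 : Euc n) ∈ U := by simpa [hU] using h0G
  have hUv : volume.real U = 2 ^ n * volume.real G := by
    have : volume U = _ := Measure.addHaar_preimage_smul (volume : Measure (Euc n))
      (r := (2:ℝ)⁻¹) (by norm_num) G
    rw [Measure.real, this]
    simp [Measure.real]
  have hUfin : volume U ≠ ⊤ := by
    intro h
    have : volume.real U = 0 := by simp [Measure.real, h]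
    rw [hUv] at this
    exact absurd this (by positivity)
  have h00 := overlap_pos hGo hfin h0U
  obtain ⟨a, ha⟩ := (concaveOn_log_overlap hGo hGc hfin).exists_supporting_functional hUo h0U
  have hsupp : ∀ z ∈ U, overlap G z ≤ overlap G 0 * Real.exp (a z) := by
    intro z hz
    have h := Real.exp_le_exp.2 (ha z hz)
    rwa [Real.exp_add, Real.exp_log h00, Real.exp_log (overlap_pos hGo hfin hz)] at h
  set m : StrongDual ℝ (Euc n) := d⁻¹ • ℓ - a with hm
  set F : Euc n → ℝ := G.indicator fun x => d - ℓ x with hF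
  set H : Euc n → ℝ := G.indicator fun x => (d - ℓ x) * m x with hH
  set L := ContinuousLinearMap.mul ℝ ℝ
  have hL : ∀ u v, L u v = u * v := fun _ _ => rfl
  have hFi : Integrable F := (integrable_indicator_iff hGm).2 (hinteg _ (by fun_prop))
  have hHi : Integrable H := (integrable_indicator_iff hGm).2 (hinteg _ (by fun_prop))
  have hF1 : ∫ x, F x = volume.real G := by rw [integral_indicator hGm, hmass]
  have hH0 : ∫ x, H x = 0 := by rw [integral_indicator hGm, hmean']
  have hFFi := hFi.integrable_convolution L hFi
  have hHFi := hHi.integrable_convolution L hFi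
  have hFHi := hFi.integrable_convolution L hHi
  -- `F * F + H * F + F * H` is the law of `x + y` under `(1 + m x + m y) w x w y`; since
  -- `∫ H = 0`, only `F * F` contributes to its total mass.
  have htotal : ∫ z, (convolution F F L volume z + convolution H F L volume z
      + convolution F H L volume z) = volume.real G * volume.real G := by
    have hi : Integrable fun z => convolution F F L volume z + convolution H F L volume z :=
      hFFi.add hHFi
    rw [integral_add hi hFHi, integral_add hFFi hHFi,
      integral_convolution L hFi hFi, integral_convolution L hHi hFi,
      integral_convolution L hFi hHi, hF1, hH0]
    simp [L]
  have hpt : ∀ᵐ z, convolution F F L volume z + convolution H F L volume z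
      + convolution F H L volume z ≤ U.indicator (fun _ => d ^ 2 * overlap G 0) z := by
    filter_upwards [hFi.ae_convolution_exists L hFi, hHi.ae_convolution_exists L hFi,
      hFi.ae_convolution_exists L hHi] with z e1 e2 e3
    have hsum : convolution F F L volume z + convolution H F L volume z
        + convolution F H L volume z = ∫ x, (1 + m z) * (F x * F (z - x)) := by
      have hi : Integrable fun x => L (F x) (F (z - x)) + L (H x) (F (z - x)) := e1.add e2
      rw [convolution, convolution, convolution, ← integral_add e1 e2, ← integral_add hi e3]
      refine integral_congr_ae (Filter.Eventually.of_forall fun x => ?_)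
      by_cases hx : x ∈ G <;> by_cases hzx : z - x ∈ G <;>
        simp only [hL, F, H, Set.indicator_of_mem, Set.indicator_of_notMem, hx, hzx,
          not_false_eq_true, map_sub m] <;> ring
    rw [hsum]
    by_cases hz : z ∈ U
    swap
    · have : ∀ x, (1 + m z) * (F x * F (z - x)) = 0 := by
        intro x
        by_cases hx : x ∈ G
        swap
        · simp [F, hx]
        by_cases hzx : z - x ∈ G
        swap
        · simp [F, hzx]
        refine absurd ?_ hz
        have := hGc hx hzx (a := (2:ℝ)⁻¹) (b := (2:ℝ)⁻¹) (by norm_num) (by norm_num) (by norm_num)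
        rw [← smul_add, add_sub_cancel] at this
        exact this
      simp [this, hz]
    rw [Set.indicator_of_mem hz]
    have hFnn : ∀ x, 0 ≤ F x := fun x => Set.indicator_nonneg hw x
    rcases le_or_gt (1 + m z) 0 with hneg | hpos
    · refine (integral_nonpos fun x => ?_).trans (by positivity)
      exact mul_nonpos_of_nonpos_of_nonneg hneg (mul_nonneg (hFnn _) (hFnn _))
    set W : ℝ := d - ℓ z / 2 with hW
    have hW0 : 0 ≤ W := by
      have := hw _ hz
      rw [map_smul, smul_eq_mul] at this
      rw [hW]; linarith
    have hSm : MeasurableSet (G ∩ (fun x => z - x) ⁻¹' G) :=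
      (hGo.inter (hGo.preimage (by fun_prop))).measurableSet
    have hSfin : volume (G ∩ (fun x => z - x) ⁻¹' G) ≠ ⊤ :=
      measure_ne_top_of_subset Set.inter_subset_left hfin
    calc ∫ x, (1 + m z) * (F x * F (z - x))
        ≤ ∫ x, (G ∩ (fun x => z - x) ⁻¹' G).indicator (fun _ => (1 + m z) * W ^ 2) x := by
          refine integral_mono_of_nonneg (Filter.Eventually.of_forall fun x =>
            mul_nonneg hpos.le (mul_nonneg (hFnn _) (hFnn _)))
            ((integrable_indicator_iff hSm).2 (integrableOn_const hSfin))
            (Filter.Eventually.of_forall fun x => ?_)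
          by_cases hx : x ∈ G
          swap
          · simp [F, hx]
          by_cases hzx : z - x ∈ G
          swap
          · simp [F, hzx]
          have hmem : x ∈ G ∩ (fun x => z - x) ⁻¹' G := ⟨hx, hzx⟩
          simp only [F, Set.indicator_of_mem hx, Set.indicator_of_mem hzx,
            Set.indicator_of_mem hmem]
          refine mul_le_mul_of_nonneg_left ?_ hpos.le
          -- AM-GM: `W` is the arithmetic mean of the two factors.
          rw [hW, map_sub]
          nlinarith [sq_nonneg (ℓ x - (ℓ z - ℓ x))]
      _ = (1 + m z) * W ^ 2 * overlap G z := by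
          rw [integral_indicator_const _ hSm, smul_eq_mul, mul_comm]; rfl
      _ ≤ (1 + m z) * W ^ 2 * (overlap G 0 * Real.exp (a z)) := by
          refine mul_le_mul_of_nonneg_left (hsupp z hz) (by positivity)
      _ ≤ Real.exp (m z) * (d * Real.exp (-(ℓ z / (2 * d)))) ^ 2
            * (overlap G 0 * Real.exp (a z)) := by
          have h1 : 1 + m z ≤ Real.exp (m z) := by
            rw [add_comm]; exact Real.add_one_le_exp _
          have h2 : W ≤ d * Real.exp (-(ℓ z / (2 * d))) := by
            have := mul_le_mul_of_nonneg_left (Real.add_one_le_exp (-(ℓ z / (2 * d)))) hd.le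
            refine le_trans (le_of_eq ?_) this
            rw [hW]; field_simp; ring
          gcongr
      _ = d ^ 2 * overlap G 0 := by
          have : Real.exp (m z) * Real.exp (-(ℓ z / (2 * d))) ^ 2 * Real.exp (a z) = 1 := by
            rw [← Real.exp_nat_mul, ← Real.exp_add, ← Real.exp_add, Real.exp_eq_one_iff, hm]
            simp
            field_simp
            ring
          linear_combination d ^ 2 * overlap G 0 * this
  have hfinal := integral_mono_ae ((hFFi.add hHFi).add hFHi)
    ((integrable_indicator_iff hUo.measurableSet).2 (integrableOn_const hUfin)) hpt
  simp only [Pi.add_apply] at hfinal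
  rw [htotal, integral_indicator_const _ hUo.measurableSet, hUv, smul_eq_mul] at hfinal
  refine le_of_mul_le_mul_right (hfinal.trans (le_of_eq ?_)) hV
  ring

/-! ### The covariance matrix and the conclusion -/

/-- Entries of the covariance matrix, the matrix-valued integral being computed entrywise. -/
theorem covMatrix_apply {n : ℕ} {K : Set (Euc n)} (hK : IsCompact K) (i j : Fin n) :
    covMatrix K i j = (volume.real K)⁻¹ *
      ∫ x in K, (x i - centroid K i) * (x j - centroid K j) := by
  have hinteg : ∀ i j : Fin n, IntegrableOn
      (fun x : Euc n => (x i - centroid K i) * (x j - centroid K j)) K := fun i j =>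
    ContinuousOn.integrableOn_compact hK (by fun_prop)
  rw [covMatrix, Matrix.of_apply, Pi.smul_apply, Pi.smul_apply,
    eval_integral (fun i => Integrable.of_eval fun j => hinteg i j), eval_integral (hinteg i)]
  rfl

theorem setIntegral_sub_centroid {n : ℕ} {K : Set (Euc n)} (hK : IsCompact K)
    (hV : 0 < volume.real K) (ℓ : StrongDual ℝ (Euc n)) :
    ∫ x in K, ℓ (x - centroid K) = 0 := by
  have hid : IntegrableOn (fun x : Euc n => x) K :=
    ContinuousOn.integrableOn_compact hK (by fun_prop)
  have hc : IntegrableOn (fun _ : Euc n => centroid K) K :=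
    ContinuousOn.integrableOn_compact hK (by fun_prop)
  have hi : IntegrableOn (fun x : Euc n => x - centroid K) K := hid.sub hc
  rw [ℓ.integral_comp_comm hi, integral_sub hid hc, setIntegral_const, centroid,
    smul_smul]
  have : volume.real K * (volume K).toReal⁻¹ = 1 := mul_inv_cancel₀ hV.ne'
  rw [this, one_smul, sub_self, map_zero]

/-- The covariance of `⟪v, x⟫` with the coordinate `x i` is the `i`-th entry of `cov(K) v`. -/
theorem setIntegral_inner_mul_coord {n : ℕ} {K : Set (Euc n)} (hK : IsCompact K)
    (hV : 0 < volume.real K) (v : Euc n) (i : Fin n) :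
    ∫ x in K, innerSL ℝ v (x - centroid K) * (x i - centroid K i) =
      volume.real K * (covMatrix K).mulVec v.ofLp i := by
  have e : ∀ x : Euc n, innerSL ℝ v (x - centroid K) * (x i - centroid K i) =
      ∑ j, ((x i - centroid K i) * (x j - centroid K j)) * v j := by
    intro x
    simp only [innerSL_apply_apply, PiLp.inner_apply, Finset.sum_mul]
    refine Finset.sum_congr rfl fun j _ => ?_
    simp; ring
  simp only [e]
  rw [integral_finsetSum _ fun j _ => ContinuousOn.integrableOn_compact hK (by fun_prop)]
  simp only [Matrix.mulVec, dotProduct, Finset.mul_sum, covMatrix_apply hK, integral_mul_const]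
  refine Finset.sum_congr rfl fun j _ => ?_
  field_simp

/-- The variance of `⟪v, x⟫` is `vᵀ cov(K) v`. -/
theorem setIntegral_inner_sq {n : ℕ} {K : Set (Euc n)} (hK : IsCompact K)
    (hV : 0 < volume.real K) (v : Euc n) :
    ∫ x in K, innerSL ℝ v (x - centroid K) ^ 2 =
      volume.real K * ∑ i, v i * (covMatrix K).mulVec v.ofLp i := by
  have e : ∀ x : Euc n, innerSL ℝ v (x - centroid K) ^ 2 =
      ∑ i, v i * (innerSL ℝ v (x - centroid K) * (x i - centroid K i)) := by
    intro x
    have : innerSL ℝ v (x - centroid K) = ∑ i, v i * (x i - centroid K i) := by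
      simp only [innerSL_apply_apply, PiLp.inner_apply]
      refine Finset.sum_congr rfl fun j _ => ?_
      simp; ring
    rw [sq]
    nth_rw 2 [this]
    rw [Finset.mul_sum]
    exact Finset.sum_congr rfl fun j _ => by ring
  simp only [e]
  rw [integral_finsetSum _ fun j _ => ContinuousOn.integrableOn_compact hK (by fun_prop)]
  simp only [integral_const_mul, setIntegral_inner_mul_coord hK hV, Finset.mul_sum]
  exact Finset.sum_congr rfl fun j _ => by ring

/-- A functional in the kernel of the covariance matrix has variance zero, hence is constant on `K`
by `sq_sub_centroid_le`, which is impossible when `K` has interior. -/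
theorem isUnit_det_covMatrix {n : ℕ} {K : Set (Euc n)} (hK : IsConvexBody K)
    (hV : 0 < volume.real K) : IsUnit (covMatrix K).det := by
  obtain ⟨hKc, hKk, x₀, hx₀⟩ := hK
  rw [isUnit_iff_ne_zero]
  intro hdet
  obtain ⟨w, hw0, hw⟩ := Matrix.exists_mulVec_eq_zero_iff.2 hdet
  set v : Euc n := WithLp.toLp 2 w with hv
  have hsq := setIntegral_inner_sq hKk hV v
  have hz : ∀ x ∈ K, innerSL ℝ v (x - centroid K) = 0 := by
    intro x hx
    have h := sq_sub_centroid_le volume hKk hKc (innerSL ℝ v)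
      (setIntegral_sub_centroid hKk hV (innerSL ℝ v)) hx
    rw [hsq] at h
    simp only [hv, hw, Pi.zero_apply, mul_zero, Finset.sum_const_zero] at h
    have h2 : innerSL ℝ v (x - centroid K) ^ 2 ≤ 0 := by
      by_contra! hc
      exact absurd h (not_le.2 (mul_pos hc hV))
    exact pow_eq_zero_iff two_ne_zero |>.1 (le_antisymm h2 (sq_nonneg _))
  have hcont : Filter.Tendsto (fun ε : ℝ => x₀ + ε • v) (nhdsWithin 0 (Set.Ioi 0))
      (nhds x₀) := by
    have : Continuous fun ε : ℝ => x₀ + ε • v := by fun_prop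
    have h := (this.tendsto 0).mono_left (nhdsWithin_le_nhds (s := Set.Ioi 0))
    simpa using h
  obtain ⟨ε, hεK, hε⟩ := ((hcont.eventually (mem_interior_iff_mem_nhds.1 hx₀)).and
    self_mem_nhdsWithin).exists
  have h1 := hz _ (interior_subset hx₀)
  have h2 := hz _ hεK
  rw [add_sub_right_comm, map_add, h1, zero_add, map_smul, smul_eq_mul, innerSL_apply_apply,
    real_inner_self_eq_norm_sq] at h2
  have hv0 : v = 0 := by
    rcases mul_eq_zero.1 h2 with h | h
    · exact absurd h (ne_of_gt hε)
    · simpa using h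
  exact hw0 (by simpa [hv] using hv0)

theorem volume_inter_neg_ge_of_centroid_close
    {n : ℕ} (hn : 1 ≤ n) (K : Set (Euc n)) (hK : IsConvexBody K)
    (hcent : centroid K ∈ ((n : ℝ) + 1)⁻¹ • inertialEllipsoid K) :
    ENNReal.ofReal (1 / (2 ^ n * Real.exp 1)) * volume K ≤ volume (K ∩ -K) := by
  obtain ⟨hKc, hKk, hKi⟩ := id hK
  have hKfin : volume K ≠ ⊤ := hKk.measure_lt_top.ne
  have hV : 0 < volume.real K := ENNReal.toReal_pos
    (Measure.measure_pos_of_nonempty_interior volume hKi).ne' hKfin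
  have hdet := isUnit_det_covMatrix hK hV
  obtain ⟨y, hy, hyb⟩ := hcent
  set b := centroid K with hb
  set C := covMatrix K with hC
  -- The tilt `1 - ⟪v, x - b⟫` by this `v` moves the barycenter to `b - cov(K) v = 0`.
  set v : Euc n := WithLp.toLp 2 (C⁻¹.mulVec b.ofLp) with hv
  have hCv : C.mulVec v.ofLp = b.ofLp := by
    simp [hv, Matrix.mulVec_mulVec, Matrix.mul_nonsing_inv _ hdet]
  set s := innerSL ℝ v b with hs
  have hs' : s = ∑ i, v i * b i := by
    simp only [hs, innerSL_apply_apply, PiLp.inner_apply]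
    exact Finset.sum_congr rfl fun j _ => by simp; ring
  have hnpos : (0 : ℝ) < (n : ℝ) + 1 := by positivity
  have hy' : y = ((n : ℝ) + 1) • b := by
    rw [← hyb]
    simp only [smul_smul, mul_inv_cancel₀ hnpos.ne', one_smul]
  have hsle : ((n : ℝ) + 1) ^ 2 * s ≤ 1 := by
    refine le_trans (le_of_eq ?_) hy
    rw [hs', Finset.mul_sum]
    refine Finset.sum_congr rfl fun i _ => ?_
    simp only [hv, Matrix.mulVec, dotProduct, Finset.sum_mul, Finset.mul_sum, hy', PiLp.smul_apply,
      smul_eq_mul]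
    exact Finset.sum_congr rfl fun j _ => by ring
  have hvar : ∫ x in K, innerSL ℝ v (x - b) ^ 2 = volume.real K * s := by
    rw [setIntegral_inner_sq hKk hV v, ← hC, hCv, hs']
  have hs0 : 0 ≤ s := by
    have : 0 ≤ ∫ x in K, innerSL ℝ v (x - b) ^ 2 := integral_nonneg fun x => sq_nonneg _
    rw [hvar] at this
    exact nonneg_of_mul_nonneg_right this hV
  -- The tilt is nonnegative on `K`, since `n (n + 2) s ≤ (n + 1)² s ≤ 1`.
  have hle1 : ∀ x ∈ K, innerSL ℝ v (x - b) ≤ 1 := by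
    intro x hx
    have h := sq_sub_centroid_le volume hKk hKc (innerSL ℝ v)
      (setIntegral_sub_centroid hKk hV (innerSL ℝ v)) hx
    rw [← hb, hvar, finrank_euclideanSpace_fin] at h
    have h2 : innerSL ℝ v (x - b) ^ 2 ≤ n * (n + 2) * s := by
      refine le_of_mul_le_mul_right (h.trans (le_of_eq ?_)) hV
      ring
    have h3 : innerSL ℝ v (x - b) ^ 2 ≤ 1 := by nlinarith
    exact (abs_le_one_iff_mul_self_le_one.2 (by nlinarith) |> abs_le.1).2
  have hinteg : ∀ f : Euc n → ℝ, Continuous f → IntegrableOn f K := fun f hf =>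
    hf.continuousOn.integrableOn_compact hKk
  have hform : ∀ x, (1 + s) - innerSL ℝ v x = 1 - innerSL ℝ v (x - b) := by
    intro x; rw [map_sub]; ring
  have hmass : ∫ x in K, ((1 + s) - innerSL ℝ v x) = volume.real K := by
    simp only [hform]
    rw [integral_sub (hinteg _ (by fun_prop)) (hinteg _ (by fun_prop)),
      setIntegral_sub_centroid hKk hV, setIntegral_const]
    simp
  have hmean : ∫ x in K, ((1 + s) - innerSL ℝ v x) • x = 0 := by
    ext i
    have h := (EuclideanSpace.proj (𝕜 := ℝ) i).integral_comp_comm (μ := volume.restrict K)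
      (φ := fun x : Euc n => ((1 + s) - innerSL ℝ v x) • x)
      (ContinuousOn.integrableOn_compact hKk (by fun_prop))
    simp only [PiLp.proj_apply, PiLp.smul_apply, smul_eq_mul] at h
    rw [← h, PiLp.zero_apply]
    have e : ∀ x : Euc n, ((1 + s) - innerSL ℝ v x) * x i =
        (x i - b i) - innerSL ℝ v (x - b) * (x i - b i)
          + ((1 + s) - innerSL ℝ v x) * b i := by
      intro x; rw [hform]; ring
    have hi : ∫ x in K, (x i - b i) = 0 :=
      setIntegral_sub_centroid hKk hV (EuclideanSpace.proj (𝕜 := ℝ) i)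
    simp only [e]
    rw [integral_add (hinteg _ (by fun_prop)) (hinteg _ (by fun_prop)),
      integral_sub (hinteg _ (by fun_prop)) (hinteg _ (by fun_prop)), integral_mul_const, hmass, hi,
      setIntegral_inner_mul_coord hKk hV, ← hC, hCv]
    ring
  -- Replacing `K` by its interior changes no integral, as the boundary is a null set.
  have hae : (interior K : Set (Euc n)) =ᵐ[volume] K := by
    refine (interior_ae_eq_of_null_frontier ?_)
    exact hKc.addHaar_frontier volume
  have hVG : volume.real (interior K) = volume.real K := measureReal_congr hae
  have hmain := volume_le_overlap_zero isOpen_interior hKc.interior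
    (hKk.isBounded.subset interior_subset) (hVG ▸ hV) (innerSL ℝ v) (d := 1 + s)
    (by linarith)
    (fun x hx => by rw [hform]; linarith [hle1 x (interior_subset hx)])
    (by rw [setIntegral_congr_set hae, hmass, hVG])
    (by rw [setIntegral_congr_set hae, hmean])
  rw [hVG] at hmain
  have hover : overlap (interior K) 0 ≤ volume.real (K ∩ -K) := by
    refine measureReal_mono ?_ (measure_ne_top_of_subset Set.inter_subset_left hKfin)
    rintro x ⟨hx, hx'⟩
    refine ⟨interior_subset hx, ?_⟩
    have := interior_subset hx'
    simpa using this
  -- As `n ≥ 1`, `(1 + s)² ≤ (1 + 1/4)² = 25/16 < e`.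
  have hsq : (1 + s) ^ 2 ≤ Real.exp 1 := by
    have hn1 : (1 : ℝ) ≤ n := by exact_mod_cast hn
    have hs4 : s ≤ 1 / 4 := by nlinarith [mul_nonneg hs0 (by nlinarith : (0:ℝ) ≤ (n + 1) ^ 2 - 4)]
    have := Real.exp_one_gt_d9
    nlinarith
  have hfin : volume.real K ≤ 2 ^ n * Real.exp 1 * volume.real (K ∩ -K) := by
    refine hmain.trans ?_
    gcongr
    exact ENNReal.toReal_nonneg
  rw [← ENNReal.ofReal_toReal hKfin,
    ← ENNReal.ofReal_toReal (measure_ne_top_of_subset (Set.inter_subset_left (t := -K)) hKfin),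
    ← ENNReal.ofReal_mul (by positivity)]
  refine ENNReal.ofReal_le_ofReal ?_
  rw [one_div, inv_mul_le_iff₀ (by positivity)]
  exact hfin

end
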